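/- For all 0 ≤ s < t < T and every bounded Borel measurable function f : ℝ^ν → ℝ, one has ℙ-almost surely E[f(b_t) | 𝔉_s] = ∫_{ℝ^ν} (p_{t−s}(b_s, a) p_{T−t}(a, y) / p_{T−s}(b_s, y)) f(a) da; i.e., the Brownian bridge is a Markov process with explicit transition kernel ρ_{s,t}(z,a) := p_{t−s}(z,a) p_{T−t}(a,y)/p_{T−s}(z,y). -/

import Mathlib

open MeasureTheory ProbabilityTheory

/-- A `ν`-dimensional Brownian motion `B` on a filtered probability space
`(Ω, m, (ℱ_t), P)` satisfying the usual conditions: the filtration is complete and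
right-continuous, `B` has continuous paths on `[0,∞)` with `B_0 = 0`, `B` is adapted, and
for `0 ≤ s ≤ t` the increment `B_t − B_s` is independent of `ℱ_s` and is a centered
Gaussian vector with covariance matrix `(t−s)·Id` (componentwise iid `N(0, t−s)`). -/
structure IsBrownianMotion {Ω : Type*} [m : MeasurableSpace Ω] (P : Measure Ω) (ν : ℕ)
    (F : Filtration ℝ m) (B : ℝ → Ω → Fin ν → ℝ) : Prop where
  complete : ∀ (t : ℝ) (A : Set Ω), P A = 0 → MeasurableSet[F t] A
  rightCont : ∀ t : ℝ, (F t : MeasurableSpace Ω) = ⨅ s ∈ Set.Ioi t, (F s : MeasurableSpace Ω)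
  contPaths : ∀ ω : Ω, ContinuousOn (fun t => B t ω) (Set.Ici 0)
  start : ∀ ω : Ω, B 0 ω = 0
  adapted : ∀ t : ℝ, Measurable[F t] (B t)
  indepIncr : ∀ s t : ℝ, 0 ≤ s → s ≤ t →
    Indep (MeasurableSpace.comap (fun ω => B t ω - B s ω) inferInstance) (F s) P
  gaussIncr : ∀ s t : ℝ, 0 ≤ s → s ≤ t →
    Measure.map (fun ω => B t ω - B s ω) P =
      Measure.pi fun _ : Fin ν => gaussianReal 0 (Real.toNNReal (t - s))

/-- The Brownian bridge from `q` to `y` in time `T` driven by the path `B`: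
`b_t = (t/T)y + ((T−t)/T)q + B_t − (T−t)∫₀ᵗ (T−s)⁻² B_s ds` for `t < T`, and `b_t = y`
otherwise (in particular `b_T = y`). -/
noncomputable def bridgeBB (ν : ℕ) (T : ℝ) (q y : Fin ν → ℝ) (B : ℝ → Fin ν → ℝ)
    (t : ℝ) : Fin ν → ℝ :=
  if t < T then
    (t / T) • y + ((T - t) / T) • q + B t -
      (T - t) • ∫ s in (0 : ℝ)..t, ((T - s) ^ 2)⁻¹ • B s
  else y

/-- The `ν`-dimensional Gaussian heat kernel `p_t(u,z) = (2πt)^{−ν/2} e^{−|u−z|²/(2t)}`. -/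
noncomputable def heatKernel (ν : ℕ) (t : ℝ) (u z : Fin ν → ℝ) : ℝ :=
  (2 * Real.pi * t) ^ (-(ν : ℝ) / 2) * Real.exp (-(∑ i, (u i - z i) ^ 2) / (2 * t))

/-! The bridge at time `t` is an affine function of the bridge at an earlier time `s` and of the
endpoint `y`, plus the Wiener integral `∫ₛᵗ (T − t)/(T − r) dB_r`. This integral is a limit of
weighted sums of increments after time `s`, hence independent of `ℱ_s` and centered Gaussian with
variance `∫ₛᵗ ((T − t)/(T − r))² dr = (T − t)(t − s)/(T − s)`. Freezing `b_s` therefore turns the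
conditional expectation into a Gaussian integral, and completing the square identifies the Gaussian
density with `p_{t−s}(b_s, a) p_{T−t}(a, y) / p_{T−s}(b_s, y)`. -/

section IsotropicGaussian

variable {ι : Type*} [Fintype ι]

/-- The Gaussian measure on `ι → ℝ` with mean `μ` and covariance matrix `v • 1`, encoded as a
product measure so that it matches the law of the increments in `IsBrownianMotion`. -/
noncomputable def isotropicGaussian (μ : ι → ℝ) (v : NNReal) : Measure (ι → ℝ) :=
  Measure.pi fun i => gaussianReal (μ i) v

instance isProbabilityMeasure_isotropicGaussian (μ : ι → ℝ) (v : NNReal) :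
    IsProbabilityMeasure (isotropicGaussian μ v) := by
  unfold isotropicGaussian
  infer_instance

lemma charFunDual_isotropicGaussian [DecidableEq ι] (μ : ι → ℝ) (v : NNReal)
    (L : StrongDual ℝ (ι → ℝ)) :
    charFunDual (isotropicGaussian μ v) L =
      Complex.exp (L μ * Complex.I - v * (∑ i, L (Pi.single i 1) ^ 2 : ℝ) / 2) := by
  have coordinate (i : ι) : charFunDual (gaussianReal (μ i) v)
      (L ∘SL ContinuousLinearMap.single ℝ (fun _ => ℝ) i) =
        Complex.exp ((μ i * L (Pi.single i 1) : ℝ) * Complex.I -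
          v * (L (Pi.single i 1) ^ 2 : ℝ) / 2) := by
    have hL : L ∘SL ContinuousLinearMap.single ℝ (fun _ => ℝ) i =
        L (Pi.single i 1) • ContinuousLinearMap.id ℝ ℝ := by
      ext
      simp
    rw [hL, ← charFun_map_eq_charFunDual_smul, ContinuousLinearMap.coe_id', Measure.map_id,
      charFun_gaussianReal]
    congr 1
    push_cast
    ring
  have hLμ : L μ = ∑ i, μ i * L (Pi.single i 1) := by
    conv_lhs => rw [pi_eq_sum_univ' μ, map_sum]
    simp only [map_smul, smul_eq_mul]
  simp_rw [isotropicGaussian, charFunDual_pi, coordinate, ← Complex.exp_sum,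
    Finset.sum_sub_distrib, ← Finset.sum_mul, ← Finset.sum_div, ← Finset.mul_sum,
    ← Complex.ofReal_sum, hLμ]

lemma isotropicGaussian_zero_var (μ : ι → ℝ) : isotropicGaussian μ 0 = Measure.dirac μ := by
  classical
  refine Measure.ext_of_charFunDual (funext fun L => ?_)
  simp [charFunDual_isotropicGaussian, charFunDual_dirac]

lemma isotropicGaussian_conv_isotropicGaussian (μ₁ μ₂ : ι → ℝ) (v₁ v₂ : NNReal) :
    isotropicGaussian μ₁ v₁ ∗ isotropicGaussian μ₂ v₂ =
      isotropicGaussian (μ₁ + μ₂) (v₁ + v₂) := by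
  classical
  refine Measure.ext_of_charFunDual (funext fun L => ?_)
  simp only [charFunDual_conv, charFunDual_isotropicGaussian, ← Complex.exp_add, map_add]
  congr 1
  push_cast
  ring

lemma isotropicGaussian_map_const_smul (c : ℝ) (μ : ι → ℝ) (v : NNReal) :
    (isotropicGaussian μ v).map (c • ·) = isotropicGaussian (c • μ) ((c ^ 2).toNNReal * v) := by
  have h := Measure.pi_map_pi (μ := fun i : ι => gaussianReal (μ i) v)
    (f := fun _ (r : ℝ) => c * r) (fun _ => by fun_prop)
  simp only [gaussianReal_map_const_mul] at h
  rw [Real.toNNReal_of_nonneg (sq_nonneg c)]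
  exact h

lemma isotropicGaussian_map_const_add (c μ : ι → ℝ) (v : NNReal) :
    (isotropicGaussian μ v).map (c + ·) = isotropicGaussian (c + μ) v := by
  have h := Measure.pi_map_pi (μ := fun i : ι => gaussianReal (μ i) v)
    (f := fun i (r : ℝ) => c i + r) (fun _ => by fun_prop)
  simp only [gaussianReal_map_const_add] at h
  simp only [isotropicGaussian, Pi.add_apply, add_comm (c _)]
  exact h

lemma isotropicGaussian_eq_withDensity (μ : ι → ℝ) {v : NNReal} (hv : v ≠ 0) :
    isotropicGaussian μ v =
      volume.withDensity fun a => ENNReal.ofReal (∏ i, gaussianPDFReal (μ i) v (a i)) := by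
  refine Measure.pi_eq fun S hS => ?_
  rw [withDensity_apply _ (MeasurableSet.univ_pi hS), volume_pi, Measure.restrict_pi_pi,
    ← ofReal_integral_eq_lintegral_ofReal
      (Integrable.fintype_prod_dep fun i => (integrable_gaussianPDFReal _ _).restrict)
      (ae_of_all _ fun a => Finset.prod_nonneg fun i _ => gaussianPDFReal_nonneg _ _ _),
    integral_fintype_prod_eq_prod (𝕜 := ℝ) (fun i => gaussianPDFReal (μ i) v),
    ENNReal.ofReal_prod_of_nonneg fun i _ => integral_nonneg fun a => gaussianPDFReal_nonneg _ _ _]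
  exact Finset.prod_congr rfl fun i _ => (gaussianReal_apply_eq_integral _ hv _).symm

lemma integral_isotropicGaussian {E : Type*} [NormedAddCommGroup E] [NormedSpace ℝ E]
    (μ : ι → ℝ) {v : NNReal} (hv : v ≠ 0) (f : (ι → ℝ) → E) :
    ∫ a, f a ∂isotropicGaussian μ v = ∫ a, (∏ i, gaussianPDFReal (μ i) v (a i)) • f a := by
  have hmeas : Measurable fun a : ι → ℝ => ∏ i, gaussianPDFReal (μ i) v (a i) :=
    Finset.measurable_fun_prod _ fun i _ =>
      (measurable_gaussianPDFReal _ _).comp (measurable_pi_apply i)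
  rw [isotropicGaussian_eq_withDensity μ hv,
    integral_withDensity_eq_integral_toReal_smul hmeas.ennreal_ofReal
      (ae_of_all _ fun _ => ENNReal.ofReal_lt_top)]
  congr with a
  rw [ENNReal.toReal_ofReal (Finset.prod_nonneg fun i _ => gaussianPDFReal_nonneg _ _ _)]

end IsotropicGaussian

section BridgeKernel

lemma gaussianPDFReal_mul_div_gaussianPDFReal_add {p q : ℝ} (hp : 0 < p) (hq : 0 < q)
    (z a y : ℝ) :
    gaussianPDFReal z p.toNNReal a * gaussianPDFReal a q.toNNReal y /
        gaussianPDFReal z (p + q).toNNReal y =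
      gaussianPDFReal (q / (p + q) * z + p / (p + q) * y) (q * p / (p + q)).toNNReal a := by
  have hpq : 0 < p + q := by positivity
  have hv : 0 < q * p / (p + q) := by positivity
  rw [div_eq_iff (gaussianPDFReal_pos _ _ _ (by simpa using hpq)).ne']
  unfold gaussianPDFReal
  rw [Real.coe_toNNReal _ hp.le, Real.coe_toNNReal _ hq.le, Real.coe_toNNReal _ hpq.le,
    Real.coe_toNNReal _ hv.le, mul_mul_mul_comm,
    mul_mul_mul_comm (√(2 * Real.pi * (q * p / (p + q))))⁻¹, ← Real.exp_add, ← Real.exp_add,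
    ← mul_inv, ← mul_inv, ← Real.sqrt_mul (by positivity), ← Real.sqrt_mul (by positivity)]
  congr 1
  · congr 2
    field_simp
  · congr 1
    field_simp
    ring

variable {ν : ℕ}

lemma heatKernel_eq_prod_gaussianPDFReal {t : ℝ} (ht : 0 ≤ t) (u z : Fin ν → ℝ) :
    heatKernel ν t u z = ∏ i, gaussianPDFReal (u i) t.toNNReal (z i) := by
  unfold heatKernel gaussianPDFReal
  rw [Finset.prod_mul_distrib, ← Real.exp_sum, Finset.prod_const, Finset.card_univ,
    Fintype.card_fin, Real.coe_toNNReal _ ht]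
  congr 1
  · rw [Real.sqrt_eq_rpow, ← Real.rpow_neg (by positivity), ← Real.rpow_natCast,
      ← Real.rpow_mul (by positivity)]
    congr 1
    ring
  · simp only [← Finset.sum_div, Finset.sum_neg_distrib, sub_sq_comm]

/-- The transition density `ρ_{s,t}(z, a)` of the Brownian bridge pinned at `y` at time `T`. -/
noncomputable def bridgeTransitionDensity (ν : ℕ) (T : ℝ) (y : Fin ν → ℝ) (s t : ℝ)
    (z a : Fin ν → ℝ) : ℝ :=
  heatKernel ν (t - s) z a * heatKernel ν (T - t) a y / heatKernel ν (T - s) z y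

variable {s t T : ℝ}

lemma bridgeTransitionDensity_eq_prod_gaussianPDFReal (hst : s < t) (htT : t < T)
    (y z a : Fin ν → ℝ) :
    bridgeTransitionDensity ν T y s t z a =
      ∏ i, gaussianPDFReal ((((T - t) / (T - s)) • z + ((t - s) / (T - s)) • y) i)
        ((T - t) * (t - s) / (T - s)).toNNReal (a i) := by
  have hp := sub_pos.2 hst
  have hq := sub_pos.2 htT
  rw [bridgeTransitionDensity, heatKernel_eq_prod_gaussianPDFReal hp.le,
    heatKernel_eq_prod_gaussianPDFReal hq.le,
    heatKernel_eq_prod_gaussianPDFReal (sub_pos.2 (hst.trans htT)).le,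
    ← Finset.prod_mul_distrib, ← Finset.prod_div_distrib]
  refine Finset.prod_congr rfl fun i _ => ?_
  have h := gaussianPDFReal_mul_div_gaussianPDFReal_add hp hq (z i) (a i) (y i)
  rwa [add_comm (t - s), sub_add_sub_cancel] at h

lemma integral_isotropicGaussian_eq_integral_bridgeTransitionDensity {E : Type*}
    [NormedAddCommGroup E] [NormedSpace ℝ E] (hst : s < t) (htT : t < T) (y z : Fin ν → ℝ)
    {f : (Fin ν → ℝ) → E} (hf : StronglyMeasurable f) :
    ∫ w, f (((T - t) / (T - s)) • z + ((t - s) / (T - s)) • y + w)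
        ∂isotropicGaussian 0 ((T - t) * (t - s) / (T - s)).toNNReal =
      ∫ a, bridgeTransitionDensity ν T y s t z a • f a := by
  have hv : ((T - t) * (t - s) / (T - s)).toNNReal ≠ 0 := by
    have := sub_pos.2 hst
    have := sub_pos.2 htT
    have := sub_pos.2 (hst.trans htT)
    exact (Real.toNNReal_pos.2 (by positivity)).ne'
  rw [← integral_map (φ := (_ + ·)) (by fun_prop) hf.aestronglyMeasurable,
    isotropicGaussian_map_const_add, add_zero, integral_isotropicGaussian _ hv]
  simp only [bridgeTransitionDensity_eq_prod_gaussianPDFReal hst htT]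

end BridgeKernel

section RiemannStieltjes

/-- The `k`-th point of the partition of `[a, b]` into `n` intervals of equal length. -/
noncomputable def uniformGrid (a b : ℝ) (n k : ℕ) : ℝ :=
  AffineMap.lineMap a b ((k : ℝ) / n)

lemma uniformGrid_zero (a b : ℝ) (n : ℕ) : uniformGrid a b n 0 = a := by
  simp [uniformGrid]

lemma uniformGrid_self (a b : ℝ) {n : ℕ} (hn : n ≠ 0) : uniformGrid a b n n = b := by
  simp [uniformGrid, hn]

lemma uniformGrid_succ_sub (a b : ℝ) (n k : ℕ) :
    uniformGrid a b n (k + 1) - uniformGrid a b n k = (b - a) / n := by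
  simp only [uniformGrid, AffineMap.lineMap_apply_ring']
  push_cast
  ring

variable {a b : ℝ}

lemma monotone_uniformGrid (hab : a ≤ b) (n : ℕ) : Monotone (uniformGrid a b n) :=
  fun _ _ hkl => AffineMap.lineMap_mono hab (by gcongr)

lemma Icc_uniformGrid_subset (hab : a ≤ b) {n k : ℕ} (hk : k < n) :
    Set.Icc (uniformGrid a b n k) (uniformGrid a b n (k + 1)) ⊆ Set.Icc a b := by
  refine Set.Icc_subset_Icc ?_ ?_
  · exact (uniformGrid_zero a b n).symm.trans_le (monotone_uniformGrid hab n k.zero_le)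
  · exact (monotone_uniformGrid hab n hk).trans_eq (uniformGrid_self a b (by omega))

lemma uniformGrid_left_mem (hab : a ≤ b) (n k : ℕ) :
    uniformGrid a b n k ∈ Set.Icc (uniformGrid a b n k) (uniformGrid a b n (k + 1)) :=
  Set.left_mem_Icc.2 (monotone_uniformGrid hab n k.le_succ)

lemma uniformGrid_right_mem (hab : a ≤ b) (n k : ℕ) :
    uniformGrid a b n (k + 1) ∈ Set.Icc (uniformGrid a b n k) (uniformGrid a b n (k + 1)) :=
  Set.right_mem_Icc.2 (monotone_uniformGrid hab n k.le_succ)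

variable {E : Type*} [NormedAddCommGroup E] [NormedSpace ℝ E]

lemma norm_sum_integral_smul_sub_integral_smul_le [CompleteSpace E] {τ : ℕ → ℝ} (hτ : Monotone τ)
    {n : ℕ} {φ : ℝ → ℝ} {h : ℝ → E} {c : ℕ → E} {η : ℝ}
    (hφ : ∀ k < n, IntervalIntegrable φ volume (τ k) (τ (k + 1)))
    (hφh : ∀ k < n, IntervalIntegrable (fun r => φ r • h r) volume (τ k) (τ (k + 1)))
    (hch : ∀ k < n, ∀ r ∈ Set.Icc (τ k) (τ (k + 1)), ‖c k - h r‖ ≤ η) :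
    ‖∑ k ∈ Finset.range n, (∫ r in τ k..τ (k + 1), φ r) • c k - ∫ r in τ 0..τ n, φ r • h r‖ ≤
      η * ∫ r in τ 0..τ n, ‖φ r‖ := by
  have cell_le (k : ℕ) (hk : k < n) :
      ‖(∫ r in τ k..τ (k + 1), φ r) • c k - ∫ r in τ k..τ (k + 1), φ r • h r‖ ≤
        η * ∫ r in τ k..τ (k + 1), ‖φ r‖ := by
    rw [← intervalIntegral.integral_smul_const,
      ← intervalIntegral.integral_sub ((hφ k hk).smul_continuousOn continuousOn_const)
        (hφh k hk),
      ← intervalIntegral.integral_const_mul]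
    refine intervalIntegral.norm_integral_le_of_norm_le (hτ k.le_succ)
      (ae_of_all _ fun r hr => ?_) ((hφ k hk).norm.const_mul η)
    rw [← smul_sub, norm_smul, mul_comm]
    gcongr
    exact hch k hk r (Set.Ioc_subset_Icc_self hr)
  rw [← intervalIntegral.sum_integral_adjacent_intervals hφh,
    ← intervalIntegral.sum_integral_adjacent_intervals fun k hk => (hφ k hk).norm,
    ← Finset.sum_sub_distrib, Finset.mul_sum]
  exact norm_sum_le_of_le _ fun k hk => cell_le k (Finset.mem_range.1 hk)

lemma tendsto_sum_integral_smul_uniformGrid [CompleteSpace E] (hab : a ≤ b) {φ : ℝ → ℝ}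
    {h : ℝ → E} (hφ : IntervalIntegrable φ volume a b) (hh : ContinuousOn h (Set.Icc a b))
    {ξ : ℕ → ℕ → ℝ}
    (hξ : ∀ n k, ξ n k ∈ Set.Icc (uniformGrid a b n k) (uniformGrid a b n (k + 1))) :
    Filter.Tendsto (fun n => ∑ k ∈ Finset.range n,
        (∫ r in uniformGrid a b n k..uniformGrid a b n (k + 1), φ r) • h (ξ n k))
      Filter.atTop (nhds (∫ r in a..b, φ r • h r)) := by
  have hφh : IntervalIntegrable (fun r => φ r • h r) volume a b :=
    hφ.smul_continuousOn (by rwa [Set.uIcc_of_le hab])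
  set M := ∫ r in a..b, ‖φ r‖
  have hM : 0 ≤ M := intervalIntegral.integral_nonneg hab fun _ _ => norm_nonneg _
  refine Metric.tendsto_nhds.2 fun ε hε => ?_
  obtain ⟨δ, hδ, hclose⟩ := Metric.uniformContinuousOn_iff.1
    (isCompact_Icc.uniformContinuousOn_of_continuous hh) (ε / (M + 1)) (by positivity)
  have mesh_lt : ∀ᶠ n : ℕ in Filter.atTop, (b - a) / n < δ :=
    (tendsto_const_div_atTop_nhds_zero_nat (b - a)).eventually_lt_const hδ
  filter_upwards [mesh_lt, Filter.eventually_ne_atTop 0] with n hmesh hn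
  have cell_subset (k : ℕ) (hk : k < n) :
      Set.uIcc (uniformGrid a b n k) (uniformGrid a b n (k + 1)) ⊆ Set.uIcc a b := by
    rw [Set.uIcc_of_le (monotone_uniformGrid hab n k.le_succ), Set.uIcc_of_le hab]
    exact Icc_uniformGrid_subset hab hk
  have error_le := norm_sum_integral_smul_sub_integral_smul_le (monotone_uniformGrid hab n)
    (fun k hk => hφ.mono_set (cell_subset k hk)) (fun k hk => hφh.mono_set (cell_subset k hk))
    (c := fun k => h (ξ n k)) (η := ε / (M + 1)) fun k hk r hr => by
      rw [← dist_eq_norm]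
      refine (hclose _ (Icc_uniformGrid_subset hab hk (hξ n k)) _
        (Icc_uniformGrid_subset hab hk hr) ?_).le
      refine (Real.dist_le_of_mem_Icc (hξ n k) hr).trans_lt ?_
      rwa [uniformGrid_succ_sub]
  rw [uniformGrid_zero, uniformGrid_self a b hn] at error_le
  calc dist _ _ ≤ ε / (M + 1) * M := by rwa [dist_eq_norm]
    _ < ε := by
      rw [div_mul_eq_mul_div, div_lt_iff₀ (by positivity)]
      gcongr
      exact lt_add_one M

lemma tendsto_sum_mul_uniformGrid (hab : a ≤ b) {h : ℝ → ℝ} (hh : ContinuousOn h (Set.Icc a b)) :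
    Filter.Tendsto (fun n => ∑ k ∈ Finset.range n,
        h (uniformGrid a b n k) * (uniformGrid a b n (k + 1) - uniformGrid a b n k))
      Filter.atTop (nhds (∫ r in a..b, h r)) := by
  have hlim := tendsto_sum_integral_smul_uniformGrid hab
    (intervalIntegrable_const (c := (1 : ℝ))) hh (uniformGrid_left_mem hab)
  simpa only [intervalIntegral.integral_const, smul_eq_mul, mul_one, one_mul, mul_comm]
    using hlim

/-- The Wiener integral `∫_a^b g dβ` of a differentiable deterministic integrand along a path
`β`, defined pathwise through integration by parts. -/
noncomputable def wienerIntegral (g : ℝ → ℝ) (β : ℝ → E) (a b : ℝ) : E :=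
  g b • β b - g a • β a - ∫ r in a..b, deriv g r • β r

lemma tendsto_sum_smul_sub_wienerIntegral [CompleteSpace E] (hab : a ≤ b) {g : ℝ → ℝ}
    (hg : ∀ r ∈ Set.Icc a b, DifferentiableAt ℝ g r)
    (hg' : IntervalIntegrable (deriv g) volume a b) {β : ℝ → E}
    (hβ : ContinuousOn β (Set.Icc a b)) :
    Filter.Tendsto (fun n => ∑ k ∈ Finset.range n, g (uniformGrid a b n k) •
        (β (uniformGrid a b n (k + 1)) - β (uniformGrid a b n k)))
      Filter.atTop (nhds (wienerIntegral g β a b)) := by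
  refine ((tendsto_sum_integral_smul_uniformGrid hab hg' hβ
    (uniformGrid_right_mem hab)).const_sub (g b • β b - g a • β a)).congr' ?_
  filter_upwards [Filter.eventually_ne_atTop 0] with n hn
  set τ := uniformGrid a b n
  have telescope := Finset.sum_range_sub (fun k => g (τ k) • β (τ k)) n
  simp only [τ, uniformGrid_self a b hn, uniformGrid_zero] at telescope
  rw [← telescope, ← Finset.sum_sub_distrib]
  refine Finset.sum_congr rfl fun k hk => ?_
  have hcell : Set.uIcc (τ k) (τ (k + 1)) ⊆ Set.Icc a b := by
    rw [Set.uIcc_of_le (monotone_uniformGrid hab n k.le_succ)]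
    exact Icc_uniformGrid_subset hab (Finset.mem_range.1 hk)
  rw [intervalIntegral.integral_deriv_eq_sub (fun r hr => hg r (hcell hr))
    (hg'.mono_set (by rwa [Set.uIcc_of_le hab]))]
  module

end RiemannStieltjes

section Independence

variable {Ω α β γ : Type*} {m₁ m₂ mΩ : MeasurableSpace Ω} {P : Measure Ω}

lemma indepFun_id_iff_indep [mα : MeasurableSpace α] (X : Ω → α) :
    @IndepFun Ω Ω α mΩ m₁ mα id X P ↔ Indep m₁ (mα.comap X) P :=
  (@IndepFun_iff_Indep Ω Ω α mΩ m₁ mα id X P).trans (by rw [MeasurableSpace.comap_id])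

variable [IsProbabilityMeasure P]

lemma indepFun_prodMk_right {mα : MeasurableSpace α} {mβ : MeasurableSpace β}
    {mγ : MeasurableSpace γ} {W : Ω → α} {X : Ω → β} {Y : Ω → γ} (hW : Measurable W)
    (hX : Measurable X) (hY : Measurable Y) (hWX : IndepFun W X P)
    (hWXY : IndepFun (fun ω => (W ω, X ω)) Y P) :
    IndepFun W (fun ω => (X ω, Y ω)) P := by
  have hXY : IndepFun X Y P := hWXY.comp measurable_snd measurable_id
  rw [indepFun_iff_map_prod_eq_prod_map_map (by fun_prop) (by fun_prop)] at *
  rw [hXY, ← Measure.prodAssoc_prod, ← hWX, ← hWXY,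
    Measure.map_map MeasurableEquiv.prodAssoc.measurable (by fun_prop)]
  rfl

lemma indep_comap_add {G : Type*} [MeasurableSpace G] [Add G] [MeasurableAdd₂ G]
    (h₁₂ : m₁ ≤ m₂) (h₂ : m₂ ≤ mΩ) {X Y : Ω → G} (hX : Measurable[m₂] X) (hY : Measurable Y)
    (hindX : Indep m₁ (MeasurableSpace.comap X inferInstance) P)
    (hindY : Indep m₂ (MeasurableSpace.comap Y inferInstance) P) :
    Indep m₁ (MeasurableSpace.comap (X + Y) inferInstance) P := by
  have hpair : Measurable[m₂, m₁.prod inferInstance] fun ω => (id ω, X ω) :=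
    (measurable_id'' h₁₂).prodMk hX
  rw [← indepFun_id_iff_indep] at hindX ⊢
  refine (indepFun_prodMk_right (measurable_id'' (h₁₂.trans h₂)) (hX.mono h₂ le_rfl) hY hindX
    ?_).comp (@measurable_id Ω m₁) measurable_add
  exact indep_of_indep_of_le_left hindY hpair.comap_le

lemma indep_comap_of_tendsto_ae {G : Type*} [TopologicalSpace G] [HasOuterApproxClosed G]
    [MeasurableSpace G] [BorelSpace G] (hm₁ : m₁ ≤ mΩ)
    {Z : ℕ → Ω → G} {Z' : Ω → G} (hZ : ∀ n, Measurable (Z n)) (hZ' : Measurable Z')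
    (hind : ∀ n, Indep m₁ (MeasurableSpace.comap (Z n) inferInstance) P)
    (hlim : ∀ᵐ ω ∂P, Filter.Tendsto (fun n => Z n ω) Filter.atTop (nhds (Z' ω))) :
    Indep m₁ (MeasurableSpace.comap Z' inferInstance) P := by
  refine indep_comap_of_bcf hm₁ hZ'.aemeasurable fun A hA f => ?_
  have integral_tendsto (B : Set Ω) : Filter.Tendsto (fun n => ∫ ω in B, f (Z n ω) ∂P)
      Filter.atTop (nhds (∫ ω in B, f (Z' ω) ∂P)) := by
    refine tendsto_integral_of_dominated_convergence (fun _ => ‖f‖)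
      (fun n => (f.continuous.measurable.comp (hZ n)).aestronglyMeasurable)
      (integrable_const _) (fun n => ae_of_all _ fun ω => f.norm_coe_le_norm _) ?_
    filter_upwards [ae_restrict_of_ae hlim] with ω hω
    exact (f.continuous.tendsto _).comp hω
  have factor (n : ℕ) : ∫ ω in A, f (Z n ω) ∂P = P.real A * ∫ ω, f (Z n ω) ∂P :=
    (hind n).setIntegral_eq_mul hm₁ (hZ n).aemeasurable hA f.continuous.aestronglyMeasurable
  have htotal := integral_tendsto Set.univ
  simp only [Measure.restrict_univ] at htotal
  refine tendsto_nhds_unique (integral_tendsto A) ?_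
  simp only [factor]
  exact htotal.const_mul _

lemma map_eq_of_tendsto_ae_of_tendsto_charFunDual {E : Type*} [NormedAddCommGroup E]
    [NormedSpace ℝ E] [MeasurableSpace E] [BorelSpace E] [SecondCountableTopology E]
    [CompleteSpace E] {μ : Measure E} [IsFiniteMeasure μ] {Z : ℕ → Ω → E} {Z' : Ω → E}
    (hZ : ∀ n, Measurable (Z n)) (hZ' : Measurable Z')
    (hlim : ∀ᵐ ω ∂P, Filter.Tendsto (fun n => Z n ω) Filter.atTop (nhds (Z' ω)))
    (hchar : ∀ L, Filter.Tendsto (fun n => charFunDual (P.map (Z n)) L) Filter.atTop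
      (nhds (charFunDual μ L))) :
    P.map Z' = μ := by
  have := Measure.isProbabilityMeasure_map (μ := P) hZ'.aemeasurable
  refine Measure.ext_of_charFunDual (funext fun L => ?_)
  refine tendsto_nhds_unique ?_ (hchar L)
  have hcont : Continuous fun z : E => Complex.exp (L z * Complex.I) := by fun_prop
  simp only [charFunDual_apply]
  rw [integral_map hZ'.aemeasurable (by fun_prop)]
  simp only [fun n => integral_map (μ := P) (hZ n).aemeasurable
    (f := fun z : E => Complex.exp (L z * Complex.I)) (by fun_prop)]
  refine tendsto_integral_of_dominated_convergence (fun _ => 1)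
    (fun n => (hcont.measurable.comp (hZ n)).aestronglyMeasurable) (integrable_const _)
    (fun n => ae_of_all _ fun ω => (Complex.norm_exp_ofReal_mul_I _).le) ?_
  filter_upwards [hlim] with ω hω
  exact (hcont.tendsto _).comp hω

lemma condDistrib_ae_eq_map_of_indepFun {mα : MeasurableSpace α} [MeasurableSpace β]
    [StandardBorelSpace β] [Nonempty β] {W : Ω → α} {Z : Ω → β} (hW : Measurable W)
    (hZ : Measurable Z) (hWZ : IndepFun W Z P) :
    condDistrib Z W P =ᵐ[P.map W] Kernel.const α (P.map Z) := by
  refine condDistrib_ae_eq_of_measure_eq_compProd W hZ.aemeasurable ?_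
  rw [Measure.compProd_const,
    (indepFun_iff_map_prod_eq_prod_map_map hW.aemeasurable hZ.aemeasurable).1 hWZ]

lemma condExp_comap_ae_eq_integral_map {E : Type*} {mα : MeasurableSpace α} [MeasurableSpace β]
    [StandardBorelSpace β] [Nonempty β] [NormedAddCommGroup E] [NormedSpace ℝ E]
    [CompleteSpace E] {W : Ω → α} {Z : Ω → β} (hW : Measurable W) (hZ : Measurable Z)
    (hWZ : IndepFun W Z P) {Φ : α × β → E} (hΦ : StronglyMeasurable Φ)
    (hint : Integrable (fun ω => Φ (W ω, Z ω)) P) :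
    P[fun ω => Φ (W ω, Z ω)|mα.comap W] =ᵐ[P] fun ω => ∫ z, Φ (W ω, z) ∂P.map Z := by
  filter_upwards [condExp_prod_ae_eq_integral_condDistrib hW hZ.aemeasurable hΦ hint,
    ae_of_ae_map hW.aemeasurable (condDistrib_ae_eq_map_of_indepFun hW hZ hWZ)] with ω hω hconst
  rw [hω, hconst, Kernel.const_apply]

lemma condExp_comp_prodMk_ae_eq_integral_map {E : Type*} [MeasurableSpace α] [MeasurableSpace β]
    [StandardBorelSpace β] [Nonempty β] [NormedAddCommGroup E] [NormedSpace ℝ E]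
    [CompleteSpace E] (hm₁ : m₁ ≤ mΩ) {X : Ω → α} {Z : Ω → β}
    (hX : Measurable[m₁] X) (hZ : Measurable Z)
    (hind : Indep m₁ (MeasurableSpace.comap Z inferInstance) P) {Φ : α × β → E}
    (hΦ : StronglyMeasurable Φ) (hint : Integrable (fun ω => Φ (X ω, Z ω)) P) :
    P[fun ω => Φ (X ω, Z ω)|m₁] =ᵐ[P] fun ω => ∫ z, Φ (X ω, z) ∂P.map Z := by
  have hΨ : StronglyMeasurable[m₁.prod inferInstance] fun q : Ω × β => Φ (X q.1, q.2) :=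
    hΦ.comp_measurable ((hX.comp measurable_fst).prodMk measurable_snd)
  have hfreeze := condExp_comap_ae_eq_integral_map (measurable_id'' hm₁) hZ
    ((indepFun_id_iff_indep Z).2 hind) hΨ hint
  rwa [MeasurableSpace.comap_id] at hfreeze

end Independence

section BrownianMotion

/-- A Brownian motion relative to the filtration `F`, with an arbitrary starting point; unlike
for `IsBrownianMotion`, the filtration need be neither complete nor right-continuous. -/
structure IsAdaptedBrownianMotion {Ω ι : Type*} [Fintype ι] {m : MeasurableSpace Ω}
    (P : Measure Ω) (F : Filtration ℝ m) (B : ℝ → Ω → ι → ℝ) : Prop where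
  continuousOn_path : ∀ ω, ContinuousOn (fun t => B t ω) (Set.Ici 0)
  measurable : ∀ t, Measurable[F t] (B t)
  indep_increment : ∀ s t, 0 ≤ s → s ≤ t →
    Indep (MeasurableSpace.comap (B t - B s) inferInstance) (F s) P
  map_increment : ∀ s t, 0 ≤ s → s ≤ t →
    P.map (B t - B s) = isotropicGaussian 0 (t - s).toNNReal

lemma IsBrownianMotion.isAdaptedBrownianMotion {Ω : Type*} [m : MeasurableSpace Ω]
    {P : Measure Ω} {ν : ℕ} {F : Filtration ℝ m} {B : ℝ → Ω → Fin ν → ℝ}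
    (hB : IsBrownianMotion P ν F B) : IsAdaptedBrownianMotion P F B :=
  ⟨hB.contPaths, hB.adapted, hB.indepIncr, hB.gaussIncr⟩

namespace IsAdaptedBrownianMotion

variable {Ω ι : Type*} [Fintype ι] {m : MeasurableSpace Ω} {P : Measure Ω}
  {F : Filtration ℝ m} {B : ℝ → Ω → ι → ℝ}

lemma measurable_increment (hB : IsAdaptedBrownianMotion P F B) {s t : ℝ} (hst : s ≤ t) :
    Measurable[F t] (B t - B s) :=
  (hB.measurable t).sub ((hB.measurable s).mono (F.mono hst) le_rfl)

section WeightedIncrements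

variable {τ : ℕ → ℝ} (c : ℕ → ℝ) (n : ℕ)

lemma measurable_sum_smul_increment (hB : IsAdaptedBrownianMotion P F B) (hτ : Monotone τ) :
    Measurable[F (τ n)] (∑ k ∈ Finset.range n, c k • (B (τ (k + 1)) - B (τ k))) := by
  have hterm (k : ℕ) (hk : k ∈ Finset.range n) :
      Measurable[F (τ n)] (c k • (B (τ (k + 1)) - B (τ k))) :=
    ((hB.measurable_increment (hτ k.le_succ)).mono
      (F.mono (hτ (Finset.mem_range.1 hk))) le_rfl).const_smul (c k)
  convert! Finset.measurable_sum _ hterm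
  exact Finset.sum_apply _ _ _

lemma indep_smul_increment (hB : IsAdaptedBrownianMotion P F B) (r : ℝ) {s t : ℝ} (hs : 0 ≤ s)
    (hst : s ≤ t) :
    Indep (F s) (MeasurableSpace.comap (r • (B t - B s)) inferInstance) P := by
  refine indep_of_indep_of_le_right (hB.indep_increment s t hs hst).symm ?_
  exact ((comap_measurable (B t - B s)).const_smul r).comap_le

lemma map_smul_increment (hB : IsAdaptedBrownianMotion P F B) (r : ℝ) {s t : ℝ} (hs : 0 ≤ s)
    (hst : s ≤ t) :
    P.map (r • (B t - B s)) = isotropicGaussian 0 (r ^ 2 * (t - s)).toNNReal := by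
  have hmeas := (hB.measurable_increment hst).mono (F.le t) le_rfl
  rw [show r • (B t - B s) = (r • ·) ∘ (B t - B s) from rfl,
    ← Measure.map_map (measurable_const_smul r) hmeas, hB.map_increment s t hs hst,
    isotropicGaussian_map_const_smul, smul_zero, Real.toNNReal_mul (sq_nonneg r)]

variable [IsProbabilityMeasure P]

lemma indep_sum_smul_increment (hB : IsAdaptedBrownianMotion P F B) (hτ₀ : 0 ≤ τ 0)
    (hτ : Monotone τ) :
    Indep (F (τ 0)) (MeasurableSpace.comap
      (∑ k ∈ Finset.range n, c k • (B (τ (k + 1)) - B (τ k))) inferInstance) P := by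
  induction n with
  | zero =>
    simp only [Finset.range_zero, Finset.sum_empty]
    exact indep_of_indep_of_le_right (indep_bot_right _) (MeasurableSpace.comap_const _).le
  | succ n ih =>
    have hn : 0 ≤ τ n := hτ₀.trans (hτ n.zero_le)
    have hn' : τ n ≤ τ (n + 1) := hτ n.le_succ
    rw [Finset.sum_range_succ]
    exact indep_comap_add (F.mono (hτ n.zero_le)) (F.le _)
      (hB.measurable_sum_smul_increment c n hτ)
      (((hB.measurable_increment hn').mono (F.le _) le_rfl).const_smul (c n)) ih
      (hB.indep_smul_increment (c n) hn hn')

lemma map_sum_smul_increment (hB : IsAdaptedBrownianMotion P F B) (hτ₀ : 0 ≤ τ 0)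
    (hτ : Monotone τ) :
    P.map (∑ k ∈ Finset.range n, c k • (B (τ (k + 1)) - B (τ k))) =
      isotropicGaussian 0 (∑ k ∈ Finset.range n, c k ^ 2 * (τ (k + 1) - τ k)).toNNReal := by
  induction n with
  | zero => simp [isotropicGaussian_zero_var, Pi.zero_def, Measure.map_const]
  | succ n ih =>
    have hn : 0 ≤ τ n := hτ₀.trans (hτ n.zero_le)
    have hn' : τ n ≤ τ (n + 1) := hτ n.le_succ
    have hsum := hB.measurable_sum_smul_increment c n hτ
    have hindep := indep_of_indep_of_le_left (hB.indep_smul_increment (c n) hn hn') hsum.comap_le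
    have nonneg (k : ℕ) : 0 ≤ c k ^ 2 * (τ (k + 1) - τ k) :=
      mul_nonneg (sq_nonneg _) (sub_nonneg.2 (hτ k.le_succ))
    rw [Finset.sum_range_succ, IndepFun.map_add_eq_map_conv_map (hsum.mono (F.le _) le_rfl)
        (((hB.measurable_increment hn').mono (F.le _) le_rfl).const_smul (c n))
        ((IndepFun_iff_Indep _ _ _).2 hindep),
      ih, hB.map_smul_increment (c n) hn hn', isotropicGaussian_conv_isotropicGaussian, add_zero,
      Finset.sum_range_succ,
      Real.toNNReal_add (Finset.sum_nonneg fun k _ => nonneg k) (nonneg n)]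

end WeightedIncrements

section WienerIntegral

variable {a b : ℝ} {g : ℝ → ℝ}

lemma tendsto_sum_smul_increment_wienerIntegral (hB : IsAdaptedBrownianMotion P F B)
    (ha : 0 ≤ a) (hab : a ≤ b) (hg : ∀ r ∈ Set.Icc a b, DifferentiableAt ℝ g r)
    (hg' : IntervalIntegrable (deriv g) volume a b) (ω : Ω) :
    Filter.Tendsto (fun n => (∑ k ∈ Finset.range n, g (uniformGrid a b n k) •
        (B (uniformGrid a b n (k + 1)) - B (uniformGrid a b n k))) ω)
      Filter.atTop (nhds (wienerIntegral g (B · ω) a b)) := by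
  simp only [Finset.sum_apply]
  exact tendsto_sum_smul_sub_wienerIntegral hab hg hg'
    ((hB.continuousOn_path ω).mono fun r hr => ha.trans hr.1)

lemma measurable_wienerIntegral (hB : IsAdaptedBrownianMotion P F B)
    (ha : 0 ≤ a) (hab : a ≤ b) (hg : ∀ r ∈ Set.Icc a b, DifferentiableAt ℝ g r)
    (hg' : IntervalIntegrable (deriv g) volume a b) :
    Measurable[F b] fun ω => wienerIntegral g (B · ω) a b := by
  refine @measurable_of_tendsto_metrizable _ _ (F b) _ _ _ _ _ _ (fun n => ?_)
    (tendsto_pi_nhds.2 (hB.tendsto_sum_smul_increment_wienerIntegral ha hab hg hg'))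
  refine (hB.measurable_sum_smul_increment _ n (monotone_uniformGrid hab n)).mono
    (F.mono ?_) le_rfl
  rcases eq_or_ne n 0 with rfl | hn
  · rwa [uniformGrid_zero]
  · rw [uniformGrid_self a b hn]

variable [IsProbabilityMeasure P]

lemma indep_wienerIntegral (hB : IsAdaptedBrownianMotion P F B)
    (ha : 0 ≤ a) (hab : a ≤ b) (hg : ∀ r ∈ Set.Icc a b, DifferentiableAt ℝ g r)
    (hg' : IntervalIntegrable (deriv g) volume a b) :
    Indep (F a) (MeasurableSpace.comap (fun ω => wienerIntegral g (B · ω) a b) inferInstance)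
      P := by
  have grid_nonneg (n : ℕ) : 0 ≤ uniformGrid a b n 0 := by rwa [uniformGrid_zero]
  refine indep_comap_of_tendsto_ae (F.le a)
    (fun n => (hB.measurable_sum_smul_increment _ n (monotone_uniformGrid hab n)).mono
      (F.le _) le_rfl)
    ((hB.measurable_wienerIntegral ha hab hg hg').mono (F.le b) le_rfl) (fun n => ?_)
    (ae_of_all _ (hB.tendsto_sum_smul_increment_wienerIntegral ha hab hg hg'))
  have hind := hB.indep_sum_smul_increment (fun k => g (uniformGrid a b n k)) n
    (grid_nonneg n) (monotone_uniformGrid hab n)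
  rwa [uniformGrid_zero] at hind

lemma map_wienerIntegral (hB : IsAdaptedBrownianMotion P F B)
    (ha : 0 ≤ a) (hab : a ≤ b) (hg : ∀ r ∈ Set.Icc a b, DifferentiableAt ℝ g r)
    (hg' : IntervalIntegrable (deriv g) volume a b) :
    P.map (fun ω => wienerIntegral g (B · ω) a b) =
      isotropicGaussian 0 (∫ r in a..b, g r ^ 2).toNNReal := by
  classical
  have grid_nonneg (n : ℕ) : 0 ≤ uniformGrid a b n 0 := by rwa [uniformGrid_zero]
  have variance_tendsto := tendsto_sum_mul_uniformGrid hab (h := fun r => g r ^ 2)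
    fun r hr => ((hg r hr).continuousAt.pow 2).continuousWithinAt
  refine map_eq_of_tendsto_ae_of_tendsto_charFunDual
    (fun n => (hB.measurable_sum_smul_increment _ n (monotone_uniformGrid hab n)).mono
      (F.le _) le_rfl)
    ((hB.measurable_wienerIntegral ha hab hg hg').mono (F.le b) le_rfl)
    (ae_of_all _ (hB.tendsto_sum_smul_increment_wienerIntegral ha hab hg hg')) fun L => ?_
  simp only [hB.map_sum_smul_increment _ _ (grid_nonneg _) (monotone_uniformGrid hab _),
    charFunDual_isotropicGaussian]
  have hcont : Continuous fun v : ℝ => Complex.exp (L 0 * Complex.I -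
      (v.toNNReal : ℂ) * (∑ i, L (Pi.single i 1) ^ 2 : ℝ) / 2) := by fun_prop
  exact (hcont.tendsto _).comp variance_tendsto

end WienerIntegral

end IsAdaptedBrownianMotion

end BrownianMotion

section Bridge

variable {s t T : ℝ}

lemma hasDerivAt_const_div_sub {r : ℝ} (c : ℝ) (hr : r < T) :
    HasDerivAt (fun r => c / (T - r)) (c * ((T - r) ^ 2)⁻¹) r := by
  have h := (((hasDerivAt_id r).const_sub T).inv (sub_ne_zero.2 hr.ne')).const_mul c
  simpa only [id, neg_neg, one_mul, Pi.inv_apply, div_eq_mul_inv] using h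

lemma intervalIntegrable_inv_sq_sub (hs : s < T) (ht : t < T) :
    IntervalIntegrable (fun r => ((T - r) ^ 2)⁻¹) volume s t :=
  ContinuousOn.intervalIntegrable <| ContinuousOn.inv₀ (by fun_prop) fun _ hr =>
    pow_ne_zero 2 (sub_ne_zero.2 (hr.2.trans_lt (max_lt hs ht)).ne')

lemma intervalIntegrable_deriv_const_div_sub (c : ℝ) (hs : s < T) (ht : t < T) :
    IntervalIntegrable (deriv fun r => c / (T - r)) volume s t := by
  refine ((intervalIntegrable_inv_sq_sub hs ht).const_mul c).congr fun r hr => ?_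
  exact (hasDerivAt_const_div_sub c
    ((Set.uIoc_subset_uIcc hr).2.trans_lt (max_lt hs ht))).deriv.symm

lemma integral_const_div_sub_sq (hst : s < T) (htT : t < T) :
    ∫ r in s..t, ((T - t) / (T - r)) ^ 2 = (T - t) * (t - s) / (T - s) := by
  have hs' := (sub_pos.2 hst).ne'
  have ht' := (sub_pos.2 htT).ne'
  have antideriv := intervalIntegral.integral_eq_sub_of_hasDerivAt
    (fun r hr => hasDerivAt_const_div_sub ((T - t) ^ 2) (hr.2.trans_lt (max_lt hst htT)))
    ((intervalIntegrable_inv_sq_sub hst htT).const_mul _)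
  simp only [div_pow, div_eq_mul_inv _ ((T - _) ^ 2), antideriv]
  field_simp
  ring

variable {ν : ℕ}

lemma bridgeBB_eq_add_wienerIntegral (hs : 0 ≤ s) (hst : s ≤ t) (htT : t < T)
    (x y : Fin ν → ℝ) {β : ℝ → Fin ν → ℝ} (hβ : ContinuousOn β (Set.Ici 0)) :
    bridgeBB ν T x y β t = ((T - t) / (T - s)) • bridgeBB ν T x y β s +
      ((t - s) / (T - s)) • y + wienerIntegral (fun r => (T - t) / (T - r)) β s t := by
  have hsT := hst.trans_lt htT
  have hT := hs.trans_lt hsT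
  have hs' := (sub_pos.2 hsT).ne'
  have ht' := (sub_pos.2 htT).ne'
  have integrable {u v : ℝ} (hu : 0 ≤ u) (huT : u < T) (hv : 0 ≤ v) (hvT : v < T) :
      IntervalIntegrable (fun r => ((T - r) ^ 2)⁻¹ • β r) volume u v :=
    (intervalIntegrable_inv_sq_sub huT hvT).smul_continuousOn
      (hβ.mono fun r hr => (le_min hu hv).trans hr.1)
  have integral_deriv : ∫ r in s..t, deriv (fun r => (T - t) / (T - r)) r • β r =
      (T - t) • ((∫ r in (0 : ℝ)..t, ((T - r) ^ 2)⁻¹ • β r) -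
        ∫ r in (0 : ℝ)..s, ((T - r) ^ 2)⁻¹ • β r) := by
    rw [intervalIntegral.integral_interval_sub_left (integrable le_rfl hT (hs.trans hst) htT)
      (integrable le_rfl hT hs hsT), ← intervalIntegral.integral_smul]
    refine intervalIntegral.integral_congr fun r hr => ?_
    simp only [(hasDerivAt_const_div_sub _ (hr.2.trans_lt (max_lt hsT htT))).deriv, mul_smul]
  rw [wienerIntegral, integral_deriv, bridgeBB, bridgeBB, if_pos hsT, if_pos htT, div_self ht']
  match_scalars <;> field_simp <;> ring

variable {Ω : Type*} {m : MeasurableSpace Ω} {P : Measure Ω} {F : Filtration ℝ m}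
  {B : ℝ → Ω → Fin ν → ℝ}

namespace IsAdaptedBrownianMotion

lemma measurable_bridgeBB (hB : IsAdaptedBrownianMotion P F B) (ht : 0 ≤ t) (htT : t < T)
    (x y : Fin ν → ℝ) : Measurable[F t] fun ω => bridgeBB ν T x y (B · ω) t := by
  have hT := ht.trans_lt htT
  have initial : Measurable[F t] fun ω => bridgeBB ν T x y (B · ω) 0 := by
    simpa [bridgeBB, hT] using ((hB.measurable 0).mono (F.mono ht) le_rfl).const_add _
  simp only [fun ω => bridgeBB_eq_add_wienerIntegral le_rfl ht htT x y (hB.continuousOn_path ω)]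
  exact ((initial.const_smul ((T - t) / (T - 0))).add_const _).add <|
    hB.measurable_wienerIntegral le_rfl ht
      (fun r hr => (hasDerivAt_const_div_sub _ (hr.2.trans_lt htT)).differentiableAt)
      (intervalIntegrable_deriv_const_div_sub _ hT htT)

end IsAdaptedBrownianMotion

theorem statement12_general [IsProbabilityMeasure P] (hB : IsAdaptedBrownianMotion P F B)
    (hs : 0 ≤ s) (hst : s < t) (htT : t < T) (x y : Fin ν → ℝ) {E : Type*}
    [NormedAddCommGroup E] [NormedSpace ℝ E] [CompleteSpace E] {f : (Fin ν → ℝ) → E}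
    (hf : StronglyMeasurable f)
    (hint : Integrable (fun ω => f (bridgeBB ν T x y (B · ω) t)) P) :
    P[fun ω => f (bridgeBB ν T x y (B · ω) t)|F s] =ᵐ[P] fun ω =>
      ∫ a, bridgeTransitionDensity ν T y s t (bridgeBB ν T x y (B · ω) s) a • f a := by
  have hsT := hst.trans htT
  set g : ℝ → ℝ := fun r => (T - t) / (T - r)
  have hg : ∀ r ∈ Set.Icc s t, DifferentiableAt ℝ g r := fun r hr =>
    (hasDerivAt_const_div_sub _ (hr.2.trans_lt htT)).differentiableAt
  have hg' : IntervalIntegrable (deriv g) volume s t :=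
    intervalIntegrable_deriv_const_div_sub _ hsT htT
  have hΦ : StronglyMeasurable fun p : (Fin ν → ℝ) × (Fin ν → ℝ) =>
      f (((T - t) / (T - s)) • p.1 + ((t - s) / (T - s)) • y + p.2) :=
    hf.comp_measurable (by fun_prop)
  simp only [fun ω => bridgeBB_eq_add_wienerIntegral hs hst.le htT x y
    (hB.continuousOn_path ω)] at hint ⊢
  filter_upwards [condExp_comp_prodMk_ae_eq_integral_map (F.le s)
    (hB.measurable_bridgeBB hs hsT x y)
    ((hB.measurable_wienerIntegral hs hst.le hg hg').mono (F.le t) le_rfl)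
    (hB.indep_wienerIntegral hs hst.le hg hg') hΦ hint] with ω hω
  rw [hω, hB.map_wienerIntegral hs hst.le hg hg', integral_const_div_sub_sq hsT htT,
    integral_isotropicGaussian_eq_integral_bridgeTransitionDensity hst htT y _ hf]

end Bridge

/-- Markov property of the Brownian bridge with explicit transition
kernel: for `0 ≤ s < t < T` and bounded Borel `f`, `P`-a.s.
`E[f(b_t) | ℱ_s] = ∫ p_{t−s}(b_s,a) p_{T−t}(a,y) f(a) da / p_{T−s}(b_s,y)`. -/
theorem statement12 {Ω : Type*} [m : MeasurableSpace Ω] (P : Measure Ω)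
    [IsProbabilityMeasure P] (ν : ℕ) (hν : 0 < ν) (F : Filtration ℝ m)
    (B : ℝ → Ω → Fin ν → ℝ) (hB : IsBrownianMotion P ν F B) (T : ℝ) (hT : 0 < T)
    (x y : Fin ν → ℝ) (s t : ℝ) (hs : 0 ≤ s) (hst : s < t) (htT : t < T)
    (f : (Fin ν → ℝ) → ℝ) (hfm : Measurable f) (hfb : ∃ C, ∀ z, |f z| ≤ C) :
    P[fun ω => f (bridgeBB ν T x y (fun u => B u ω) t)|F s] =ᵐ[P]
      fun ω => ∫ a : Fin ν → ℝ,
        heatKernel ν (t - s) (bridgeBB ν T x y (fun u => B u ω) s) a *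
          heatKernel ν (T - t) a y /
            heatKernel ν (T - s) (bridgeBB ν T x y (fun u => B u ω) s) y * f a := by
  obtain ⟨C, hC⟩ := hfb
  have hB' := hB.isAdaptedBrownianMotion
  have hbridge := (hB'.measurable_bridgeBB (hs.trans hst.le) htT x y).mono (F.le t) le_rfl
  exact statement12_general hB' hs hst htT x y hfm.stronglyMeasurable <|
    Integrable.of_bound (hfm.comp hbridge).aestronglyMeasurable C (ae_of_all _ fun ω => hC _)
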